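/- Assume x̄₀ > 0 and x̄_∞ > 0, let t_∞ ≥ 0 be such that φ_t(x₀) ∉ L := {x_∞ + r D_∞ᵀ : r ∈ ℝ} for all t ≥ t_∞, and for z ∈ ℝ² set s_z = inf{t ≥ t_∞ : φ_t(x₀ + z) ∈ L}. Then for every C > 0 and ε > 0 there exists ρ > 0 such that for all z with 0 < |z| < ρ, D₀z > 0 and |z| ≤ C (D₀z), one has |(x̄_∞/(D₀z))^{μ/λ} (φ_{s_z}(x₀ + z) − x_∞) − x̄₀ D_∞ᵀ/|D_∞|²| < ε (Theorem 3.5, hitting-position asymptotics). -/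

import Mathlib

/-!
In the coordinates of the linearization `h`, the orbit of `x₀ + z` is
`t ↦ (e^{-μt} A, e^{λt} β)` with `(A, β) = h (x₀ + z)`, as long as this linear orbit stays in a
small ball (`SaddleFlow.track`). The limits defining `x̄₀`, `x̄_∞`, `D₀`, `D_∞` identify
`h x₀ = (x̄₀, 0)` and `h x_∞ = (0, x̄_∞)` (`coord_of_tendsto`), and `D₀`, `D_∞` with the second row
of `Dh x₀` and the first row of `Dh x_∞` (`row_of_tendsto`). Hence `A → x̄₀`, and `β ~ D₀z` in the
cone `|z| ≤ C (D₀z)`.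

The first hitting time `s` of `L` satisfies `b := e^{λs} β → x̄_∞` (`SaddleFlow.first_hit`). The line
`L` meets the local unstable curve only at `x_∞`, transversally (`SaddleFlow.side_sign`), because
`Dh` and `Dh⁻¹` are within `1/2` of the identity, and `L` misses the orbit of `x₀` after `t_∞`.
By compactness an orbit starting close to `x₀` cannot hit `L` before `e^{λt} β` is close to `x̄_∞`
(`SaddleFlow.no_early_hit`), and it does hit when this quantity crosses `x̄_∞`.

At the hitting time, `a := e^{-μs} A = A (β / b)^{μ/λ}`, so `(x̄_∞/(D₀z))^{μ/λ} a → x̄₀`. The hitting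
point `p` tends to `x_∞`, so `a` is equivalent to `D_∞ (p - x_∞)` by differentiability of `h`
at `x_∞`, and `p - x_∞` is the multiple `D_∞ (p - x_∞) / |D_∞|²` of `D_∞ᵀ`.
-/


open Filter Topology Metric Real RealInnerProductSpace

noncomputable section

/-- An element of `ℝ²` (with the Euclidean norm) with given coordinates. -/
def vec2 (a b : ℝ) : EuclideanSpace ℝ (Fin 2) := (WithLp.equiv 2 (Fin 2 → ℝ)).symm ![a, b]

/-- The setup of Turner, "Convergence of Markov processes near saddle fixed points",
Section 3: a saddle-type vector field `b x = B x + τ x` with `B = diag(-μ, λ)`,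
a flow `φ` for `b`, a Hartman linearization `h` on a neighbourhood `U` of `0`,
and a radius `δ` on which `h` is close to the identity. -/
structure SaddleFlow where
  lam : ℝ
  mu : ℝ
  lam_pos : 0 < lam
  mu_pos : 0 < mu
  /-- the nonlinearity τ -/
  tau : EuclideanSpace ℝ (Fin 2) → EuclideanSpace ℝ (Fin 2)
  tau_smooth : ContDiff ℝ 2 tau
  tau_zero : tau 0 = 0
  dtau_zero : fderiv ℝ tau 0 = 0
  /-- the flow of `b x = B x + τ x` -/
  phi : ℝ → EuclideanSpace ℝ (Fin 2) → EuclideanSpace ℝ (Fin 2)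
  phi_zero : ∀ x, phi 0 x = x
  phi_hasDerivAt : ∀ t x, HasDerivAt (fun s => phi s x)
      (vec2 (-mu * (phi t x) 0) (lam * (phi t x) 1) + tau (phi t x)) t
  phi_add : ∀ t s x, phi (t + s) x = phi t (phi s x)
  phi_contDiff : ∀ t, ContDiff ℝ 1 (phi t)
  /-- the domain of the Hartman linearization -/
  U : Set (EuclideanSpace ℝ (Fin 2))
  U_open : IsOpen U
  U_mem : (0 : EuclideanSpace ℝ (Fin 2)) ∈ U
  /-- the linearizing C¹ diffeomorphism `h : U → V = h '' U` and its inverse -/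
  h : EuclideanSpace ℝ (Fin 2) → EuclideanSpace ℝ (Fin 2)
  hinv : EuclideanSpace ℝ (Fin 2) → EuclideanSpace ℝ (Fin 2)
  h_smooth : ∀ x ∈ U, ContDiffAt ℝ 1 h x
  hinv_smooth : ∀ y ∈ h '' U, ContDiffAt ℝ 1 hinv y
  V_open : IsOpen (h '' U)
  left_inv : ∀ x ∈ U, hinv (h x) = x
  right_inv : ∀ y ∈ h '' U, h (hinv y) = y
  /-- the Hölder exponent of the partial derivatives of `h`, `h⁻¹` -/
  alpha0 : ℝ
  alpha0_mem : alpha0 ∈ Set.Ioc (0 : ℝ) 1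
  holder : ∃ C : ℝ,
      (∀ x ∈ U, ∀ y ∈ U, ‖fderiv ℝ h x - fderiv ℝ h y‖ ≤ C * ‖x - y‖ ^ alpha0) ∧
      (∀ x ∈ h '' U, ∀ y ∈ h '' U,
        ‖fderiv ℝ hinv x - fderiv ℝ hinv y‖ ≤ C * ‖x - y‖ ^ alpha0)
  /-- `h x = x + o(|x|)` as `x → 0` -/
  h_littleO : (fun x => h x - x) =o[𝓝 (0 : EuclideanSpace ℝ (Fin 2))] (fun x => x)
  /-- the conjugation `h (φ_t x) = e^{Bt} (h x)` -/
  h_conj : ∀ t x, x ∈ U → phi t x ∈ U →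
      h (phi t x) = vec2 (Real.exp (-mu * t) * (h x) 0) (Real.exp (lam * t) * (h x) 1)
  /-- the radius δ -/
  delta : ℝ
  delta_pos : 0 < delta
  delta_lt_one : delta < 1
  ball_sub : closedBall (0 : EuclideanSpace ℝ (Fin 2)) delta ⊆ U ∩ h '' U
  /-- `sup_{0<|x|<δ} max(|h x|/|x|, |h⁻¹ x|/|x|) < 2` -/
  h_ratio : ∃ c : ℝ, c < 2 ∧ ∀ x : EuclideanSpace ℝ (Fin 2), ‖x‖ < delta →
      ‖h x‖ ≤ c * ‖x‖ ∧ ‖hinv x‖ ≤ c * ‖x‖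
  /-- `sup_{|x|<δ} max(‖Dh(x) − I‖, ‖Dh⁻¹(x) − I‖) < 1/2` -/
  deriv_close : ∃ c : ℝ, c < 1/2 ∧ ∀ x : EuclideanSpace ℝ (Fin 2), ‖x‖ < delta →
      ‖fderiv ℝ h x - ContinuousLinearMap.id ℝ (EuclideanSpace ℝ (Fin 2))‖ ≤ c ∧
      ‖fderiv ℝ hinv x - ContinuousLinearMap.id ℝ (EuclideanSpace ℝ (Fin 2))‖ ≤ c

/-! ### Coordinates in the plane -/

@[simp] lemma vec2_zero' (a b : ℝ) : vec2 a b 0 = a := rfl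

@[simp] lemma vec2_one' (a b : ℝ) : vec2 a b 1 = b := rfl

lemma vec2_eta (x : EuclideanSpace ℝ (Fin 2)) : vec2 (x 0) (x 1) = x := by
  ext i; fin_cases i <;> rfl

lemma vec2_sub (a b c d : ℝ) : vec2 a b - vec2 c d = vec2 (a - c) (b - d) := by
  ext i; fin_cases i <;> rfl

lemma continuous_vec2 : Continuous (fun p : ℝ × ℝ => vec2 p.1 p.2) := by
  unfold vec2
  refine (PiLp.continuous_toLp 2 _).comp (continuous_pi fun i => ?_)
  fin_cases i
  · exact continuous_fst
  · exact continuous_snd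

lemma norm_vec2_sq (a b : ℝ) : ‖vec2 a b‖ ^ 2 = a ^ 2 + b ^ 2 := by
  rw [EuclideanSpace.norm_sq_eq, Fin.sum_univ_two]
  simp

lemma norm_vec2_le (a b : ℝ) : ‖vec2 a b‖ ≤ |a| + |b| := by
  refine abs_le_of_sq_le_sq' ?_ (by positivity) |>.2
  rw [norm_vec2_sq]
  nlinarith [sq_abs a, sq_abs b, abs_nonneg a, abs_nonneg b]

lemma abs_coord_le (x : EuclideanSpace ℝ (Fin 2)) (i : Fin 2) : |x i| ≤ ‖x‖ :=
  PiLp.norm_apply_le x i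

lemma inner_eq (x y : EuclideanSpace ℝ (Fin 2)) : ⟪x, y⟫ = x 0 * y 0 + x 1 * y 1 := by
  simp [PiLp.inner_apply, Fin.sum_univ_two, mul_comm]

/-! ### Linear data at the end points -/

/-- A rescaled orbit converging to `0` reads off a coordinate of its linearized initial value. -/
lemma coord_of_tendsto {h : EuclideanSpace ℝ (Fin 2) → EuclideanSpace ℝ (Fin 2)}
    (ho : (fun x => h x - x) =o[𝓝 (0 : EuclideanSpace ℝ (Fin 2))] (fun x => x))
    {P : ℝ → EuclideanSpace ℝ (Fin 2)} {k m : ℝ → ℝ} {v : EuclideanSpace ℝ (Fin 2)}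
    {i : Fin 2} {y : ℝ}
    (hP : Tendsto P atTop (𝓝 0)) (hkm : ∀ t, k t * m t = 1)
    (hv : Tendsto (fun t => k t • P t) atTop (𝓝 v))
    (hc : ∀ᶠ t in atTop, h (P t) i = m t * y) : y = v i := by
  have h1 : (fun t => h (P t) - P t) =o[atTop] P := ho.comp_tendsto hP
  have h2 : (fun t => k t • (h (P t) - P t)) =o[atTop] (fun t => k t • P t) :=
    (Asymptotics.isBigO_refl k atTop).smul_isLittleO h1
  have h3 : Tendsto (fun t => k t • (h (P t) - P t)) atTop (𝓝 0) :=
    (Asymptotics.isLittleO_one_iff ℝ).1 (h2.trans_isBigO (hv.isBigO_one ℝ))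
  have h4 : Tendsto (fun t => k t • h (P t)) atTop (𝓝 v) := by
    have := h3.add hv
    rw [zero_add] at this
    refine this.congr fun t => ?_
    rw [smul_sub, sub_add_cancel]
  have h5 : Tendsto (fun t => (k t • h (P t)) i) atTop (𝓝 (v i)) :=
    ((EuclideanSpace.proj (𝕜 := ℝ) i).continuous.tendsto v).comp h4
  refine tendsto_nhds_unique (tendsto_const_nhds.congr' ?_) h5
  filter_upwards [hc] with t ht
  rw [PiLp.smul_apply, ht, smul_eq_mul, ← mul_assoc, hkm, one_mul]

/-- The limit of the rescaled Jacobians of the orbit maps is the corresponding row of `Dh`: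
differentiate `h ∘ P t = diag ∘ h` and use `Dh(P t x) → Dh(0) = I`. -/
lemma row_of_tendsto {h : EuclideanSpace ℝ (Fin 2) → EuclideanSpace ℝ (Fin 2)}
    {U : Set (EuclideanSpace ℝ (Fin 2))} (hU : IsOpen U) (h0 : (0 : EuclideanSpace ℝ (Fin 2)) ∈ U)
    (hs : ∀ x ∈ U, ContDiffAt ℝ 1 h x) (hd0 : HasFDerivAt h (ContinuousLinearMap.id ℝ _) 0)
    {P : ℝ → EuclideanSpace ℝ (Fin 2) → EuclideanSpace ℝ (Fin 2)} {k m : ℝ → ℝ}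
    {x D : EuclideanSpace ℝ (Fin 2)} (hx : x ∈ U)
    {i : Fin 2}
    (hPd : ∀ t, ContDiff ℝ 1 (P t))
    (hP : Tendsto (fun t => P t x) atTop (𝓝 0)) (hkm : ∀ t, k t * m t = 1)
    (hD : Tendsto (fun t => k t • fderiv ℝ (P t) x) atTop
      (𝓝 ((innerSL ℝ D).smulRight (EuclideanSpace.single i (1 : ℝ)))))
    (hc : ∀ t, ∀ y ∈ U, P t y ∈ U → h (P t y) i = m t * h y i) (y : EuclideanSpace ℝ (Fin 2)) :
    (fderiv ℝ h x y) i = ⟪D, y⟫ := by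
  have hcont : ContinuousAt (fderiv ℝ h) 0 := (hs 0 h0).continuousAt_fderiv one_ne_zero
  have h1 : Tendsto (fun t => fderiv ℝ h (P t x)) atTop (𝓝 (ContinuousLinearMap.id ℝ _)) := by
    have := hcont.tendsto.comp hP
    rwa [hd0.fderiv] at this
  have h2 : Tendsto (fun t => (fderiv ℝ h (P t x) ((k t • fderiv ℝ (P t) x) y)) i) atTop
      (𝓝 (((ContinuousLinearMap.id ℝ (EuclideanSpace ℝ (Fin 2)))
        (((innerSL ℝ D).smulRight (EuclideanSpace.single i (1 : ℝ))) y)) i)) := by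
    have ev : ∀ p : (EuclideanSpace ℝ (Fin 2) →L[ℝ] EuclideanSpace ℝ (Fin 2)) ×
        EuclideanSpace ℝ (Fin 2), Tendsto (fun q => q.1 q.2) (𝓝 p) (𝓝 (p.1 p.2)) := fun p =>
      (isBoundedBilinearMap_apply (𝕜 := ℝ)).continuous.tendsto p
    have h3 := (ev (_, y)).comp (hD.prodMk_nhds (tendsto_const_nhds (x := y)))
    exact ((EuclideanSpace.proj (𝕜 := ℝ) i).continuous.tendsto _).comp
      ((ev (_, _)).comp (h1.prodMk_nhds h3))
  have h4 : ((ContinuousLinearMap.id ℝ (EuclideanSpace ℝ (Fin 2)))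
        (((innerSL ℝ D).smulRight (EuclideanSpace.single i (1 : ℝ))) y)) i = ⟪D, y⟫ := by
    simp
  rw [h4] at h2
  refine tendsto_nhds_unique (tendsto_const_nhds.congr' ?_) h2
  filter_upwards [hP.eventually (hU.mem_nhds h0)] with t ht
  have hdP : HasFDerivAt (P t) (fderiv ℝ (P t) x) x :=
    ((hPd t).differentiable one_ne_zero x).hasFDerivAt
  have hdh : HasFDerivAt h (fderiv ℝ h (P t x)) (P t x) :=
    ((hs _ ht).differentiableAt one_ne_zero).hasFDerivAt
  have hdx : HasFDerivAt h (fderiv ℝ h x) x :=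
    ((hs _ hx).differentiableAt one_ne_zero).hasFDerivAt
  have e1 := ((EuclideanSpace.proj (𝕜 := ℝ) i).hasFDerivAt (x := h (P t x))).comp x
    (hdh.comp x hdP)
  have e2 := (((EuclideanSpace.proj (𝕜 := ℝ) i).hasFDerivAt (x := h x)).comp x hdx).const_mul (m t)
  have e3 : (fun y => m t * (EuclideanSpace.proj (𝕜 := ℝ) i ∘ h) y) =ᶠ[𝓝 x]
      (EuclideanSpace.proj (𝕜 := ℝ) i ∘ (h ∘ P t)) := by
    filter_upwards [hU.mem_nhds hx,
      hdP.continuousAt.tendsto.eventually (hU.mem_nhds ht)] with y hy hy'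
    exact (hc t y hy hy').symm
  have e4 := congrArg (fun T => T y) ((e1.congr_of_eventuallyEq e3).unique e2)
  have e5 : (fderiv ℝ h (P t x) (fderiv ℝ (P t) x y)) i = m t * (fderiv ℝ h x y) i := by
    simpa using e4
  rw [_root_.smul_apply, map_smul, PiLp.smul_apply, e5, smul_eq_mul, ← mul_assoc,
    hkm, one_mul]

/-! ### Conjugation of orbits to the linear flow -/

namespace SaddleFlow

variable (S : SaddleFlow)

lemma mem_U {x : EuclideanSpace ℝ (Fin 2)} (hx : ‖x‖ ≤ S.delta) : x ∈ S.U :=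
  (S.ball_sub (mem_closedBall_zero_iff.2 hx)).1

lemma mem_V {x : EuclideanSpace ℝ (Fin 2)} (hx : ‖x‖ ≤ S.delta) : x ∈ S.h '' S.U :=
  (S.ball_sub (mem_closedBall_zero_iff.2 hx)).2

lemma h_zero : S.h 0 = 0 := by
  obtain ⟨c, -, hc⟩ := S.h_ratio
  have := (hc 0 (by simpa using S.delta_pos)).1
  simpa using this

lemma hinv_zero : S.hinv 0 = 0 := by
  obtain ⟨c, -, hc⟩ := S.h_ratio
  have := (hc 0 (by simpa using S.delta_pos)).2
  simpa using this

lemma norm_hinv_le {y : EuclideanSpace ℝ (Fin 2)} (hy : ‖y‖ < S.delta) :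
    ‖S.hinv y‖ ≤ 2 * ‖y‖ := by
  obtain ⟨c, h2, hc⟩ := S.h_ratio
  nlinarith [(hc y hy).2, norm_nonneg y]

lemma hasFDerivAt_h_zero : HasFDerivAt S.h (ContinuousLinearMap.id ℝ _) 0 := by
  rw [hasFDerivAt_iff_isLittleO_nhds_zero]
  simpa [S.h_zero] using S.h_littleO

lemma continuous_phi (x : EuclideanSpace ℝ (Fin 2)) : Continuous fun t => S.phi t x :=
  continuous_iff_continuousAt.2 fun t => (S.phi_hasDerivAt t x).continuousAt

/-- The linear flow `e^{Bt}` applied to `(a, b)`. -/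
def lin (t : ℝ) (y : EuclideanSpace ℝ (Fin 2)) : EuclideanSpace ℝ (Fin 2) :=
  vec2 (Real.exp (-S.mu * t) * y 0) (Real.exp (S.lam * t) * y 1)

/-- As long as the linear orbit of `h x` stays in a small ball, the orbit of `x` stays in the ball
of radius `δ`, where `h` conjugates it to the linear one: the norm of the orbit would have to pass
the value `7δ/8`, but by conjugacy it is at most `3δ/4` whenever it is below `δ`. -/
lemma track {x : EuclideanSpace ℝ (Fin 2)} (hx : ‖x‖ ≤ 7 / 8 * S.delta) {T : ℝ}
    (hT : ∀ s ∈ Set.Icc 0 T, ‖S.lin s (S.h x)‖ ≤ 3 / 8 * S.delta) {s : ℝ}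
    (hs : s ∈ Set.Icc 0 T) :
    S.phi s x ∈ S.U ∧ S.h (S.phi s x) = S.lin s (S.h x) ∧
      S.phi s x = S.hinv (S.lin s (S.h x)) := by
  have hδ := S.delta_pos
  have key : ∀ s ∈ Set.Icc 0 T, ‖S.phi s x‖ < S.delta →
      S.phi s x ∈ S.U ∧ S.h (S.phi s x) = S.lin s (S.h x) ∧
      S.phi s x = S.hinv (S.lin s (S.h x)) := by
    intro s _ hn
    have hU := S.mem_U hn.le
    have hh : S.h (S.phi s x) = S.lin s (S.h x) := S.h_conj s x (S.mem_U (by linarith)) hU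
    exact ⟨hU, hh, by rw [← hh, S.left_inv _ hU]⟩
  refine key s hs ?_
  by_contra! hge
  have hiv := intermediate_value_Icc hs.1 (S.continuous_phi x).norm.continuousOn
  obtain ⟨u, hu, hu'⟩ := hiv (show 7 / 8 * S.delta ∈ _ from
    ⟨by simpa [S.phi_zero] using hx, by linarith⟩)
  have huT : u ∈ Set.Icc 0 T := ⟨hu.1, hu.2.trans hs.2⟩
  have hu'' : ‖S.phi u x‖ = 7 / 8 * S.delta := hu'
  have h1 := (key u huT (by rw [hu'']; linarith)).2.2
  have h2 := hT u huT
  have h3 := S.norm_hinv_le (lt_of_le_of_lt h2 (by linarith))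
  rw [← h1] at h3
  linarith

lemma continuousOn_hinv : ContinuousOn S.hinv (ball 0 S.delta) := fun y hy =>
  (S.hinv_smooth y (S.mem_V (mem_ball_zero_iff.1 hy).le)).continuousAt.continuousWithinAt

end SaddleFlow

/-! ### The line `L` and the first hit -/

/-- An affine function whose zero set, for `D ≠ 0`, is the line through `q` with direction `D`:
the determinant of the pair `(D, x - q)`. -/
def side (D q x : EuclideanSpace ℝ (Fin 2)) : ℝ := D 0 * (x - q) 1 - D 1 * (x - q) 0

lemma continuous_side (D q : EuclideanSpace ℝ (Fin 2)) : Continuous (side D q) := by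
  unfold side; fun_prop

lemma mem_line_iff {D q x : EuclideanSpace ℝ (Fin 2)} (hD : 0 < D 0) :
    (∃ r : ℝ, x = q + r • D) ↔ side D q x = 0 := by
  constructor
  · rintro ⟨r, rfl⟩
    simp [side]; ring
  · intro hx
    refine ⟨(x - q) 0 / D 0, ?_⟩
    unfold side at hx
    ext i
    fin_cases i
    · simp; field_simp; ring
    · simp only [PiLp.sub_apply] at hx
      simp; field_simp; linarith

namespace SaddleFlow

variable (S : SaddleFlow)

/-- The line `L` crosses the local unstable curve `b ↦ h⁻¹(0, b)` only at `x_∞`: since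
`‖Dh - I‖` and `‖Dh⁻¹ - I‖` are below `1/2`, the line makes an angle below `π/6` with the first
axis and the chords of the curve make an angle below `π/6` with the second axis. -/
lemma side_sign {q D : EuclideanSpace ℝ (Fin 2)} {w : ℝ} (hq : ‖q‖ < S.delta)
    (hw : |w| < S.delta) (hhq : S.h q = vec2 0 w)
    (hrow : ∀ y, (fderiv ℝ S.h q y) 0 = ⟪D, y⟫) :
    0 < D 0 ∧ ∀ b, |b| < S.delta → b ≠ w → 0 < (b - w) * side D q (S.hinv (vec2 0 b)) := by
  obtain ⟨c, hc, hcl⟩ := S.deriv_close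
  set M : EuclideanSpace ℝ (Fin 2) →L[ℝ] EuclideanSpace ℝ (Fin 2) :=
    fderiv ℝ S.h q - ContinuousLinearMap.id ℝ _ with hM
  have hMa : ∀ y, M y 0 = ⟪D, y⟫ - y 0 := fun y => by rw [← hrow]; rfl
  have h5 : ‖M‖ ≤ c := (hcl q hq).1
  have hD0 : |D 0 - 1| ≤ c := by
    have h2 := M.le_opNorm (vec2 1 0)
    have h3 := abs_coord_le (M (vec2 1 0)) 0
    have h4 : ‖vec2 1 0‖ ≤ 1 := by simpa using norm_vec2_le 1 0
    rw [hMa, inner_eq] at h3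
    simp only [vec2_zero', vec2_one', mul_one, mul_zero, add_zero] at h3
    refine h3.trans (le_trans h2 ?_)
    nlinarith [norm_nonneg M, norm_nonneg (vec2 1 0)]
  have hD1 : |D 1| ≤ c := by
    have h2 := M.le_opNorm (vec2 0 1)
    have h3 := abs_coord_le (M (vec2 0 1)) 0
    have h4 : ‖vec2 0 1‖ ≤ 1 := by simpa using norm_vec2_le 0 1
    rw [hMa, inner_eq] at h3
    simp only [vec2_zero', vec2_one', mul_one, mul_zero, zero_add, sub_zero] at h3
    refine h3.trans (le_trans h2 ?_)
    nlinarith [norm_nonneg M, norm_nonneg (vec2 0 1)]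
  have hc0 : 0 ≤ c := (abs_nonneg _).trans hD1
  refine ⟨by linarith [(abs_le.1 hD0).1], fun b hb hbw => ?_⟩
  have hmem : ∀ t : ℝ, |t| < S.delta → vec2 0 t ∈ ball (0 : EuclideanSpace ℝ (Fin 2)) S.delta :=
    fun t ht => mem_ball_zero_iff.2 ((norm_vec2_le 0 t).trans_lt (by simpa using ht))
  have hmv := (convex_ball (0 : EuclideanSpace ℝ (Fin 2)) S.delta).norm_image_sub_le_of_norm_fderiv_le'
    (𝕜 := ℝ) (f := S.hinv) (C := c) (φ := ContinuousLinearMap.id ℝ _)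
    (fun y hy => (S.hinv_smooth y (S.mem_V (mem_ball_zero_iff.1 hy).le)).differentiableAt
      one_ne_zero)
    (fun y hy => (hcl y (mem_ball_zero_iff.1 hy)).2)
    (hmem w hw) (hmem b hb)
  have hqw : S.hinv (vec2 0 w) = q := by rw [← hhq, S.left_inv q (S.mem_U hq.le)]
  rw [hqw, vec2_sub] at hmv
  set e := S.hinv (vec2 0 b) - q with he
  have hn : ‖vec2 (0 - 0) (b - w)‖ ≤ |b - w| := by simpa using norm_vec2_le 0 (b - w)
  have hle := hmv.trans (mul_le_mul_of_nonneg_left hn hc0)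
  have g0 := (abs_coord_le _ 0).trans hle
  have g1 := (abs_coord_le _ 1).trans hle
  simp at g0 g1
  have hpos : 0 < |b - w| := abs_pos.2 (sub_ne_zero.2 hbw)
  have hside : side D q (S.hinv (vec2 0 b)) = D 0 * e 1 - D 1 * e 0 := rfl
  rw [hside]
  -- with `u = b - w`: `D₀ ≥ 1 - c`, `u e₁ ≥ (1 - c) u²`, `|D₁ u e₀| ≤ c² u²`
  have i1 : (1 - c) * |b - w| ^ 2 ≤ (b - w) * e 1 := by
    have : |(b - w) * (e 1 - (b - w))| ≤ |b - w| * (c * |b - w|) := by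
      rw [abs_mul]; exact mul_le_mul_of_nonneg_left g1 hpos.le
    have := (abs_le.1 this).1
    nlinarith [sq_abs (b - w)]
  have i2 : D 1 * ((b - w) * e 0) ≤ c * (|b - w| * (c * |b - w|)) := by
    refine (le_abs_self _).trans ?_
    rw [abs_mul, abs_mul]
    gcongr
  have i3 : (1 - c) * ((1 - c) * |b - w| ^ 2) ≤ D 0 * ((b - w) * e 1) :=
    mul_le_mul (by linarith [(abs_le.1 hD0).1]) i1
      (mul_nonneg (by linarith) (by positivity)) (by linarith [(abs_le.1 hD0).1])
  have : 0 < (1 - 2 * c) * |b - w| ^ 2 := mul_pos (by linarith) (by positivity)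
  nlinarith

/-- Along orbits starting near the stable manifold, the stable coordinate is small from the
moment the unstable coordinate has reached a fixed size `κ`. -/
lemma stable_small (xb : ℝ) {κ r : ℝ} (hκ : 0 < κ) (hr : 0 < r) :
    ∀ᶠ p : ℝ × ℝ in 𝓝 (xb, 0), 0 < p.2 → 0 < p.1 → ∀ t, κ ≤ Real.exp (S.lam * t) * p.2 →
      Real.exp (-S.mu * t) * p.1 < r := by
  have hl := S.lam_pos
  have hm := S.mu_pos
  have hpos : 0 < S.mu / S.lam := div_pos hm hl
  have hcont : ContinuousAt (fun p : ℝ × ℝ => (p.2 / κ) ^ (S.mu / S.lam) * p.1) (xb, 0) :=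
    ((continuousAt_snd.div_const κ).rpow_const (Or.inr hpos.le)).mul continuousAt_fst
  have hev := hcont.tendsto.eventually (gt_mem_nhds (by
    simpa [Real.zero_rpow hpos.ne'] using hr) : ∀ᶠ u in _, u < r)
  filter_upwards [hev] with p hp h2 h1 t ht
  refine lt_of_le_of_lt (mul_le_mul_of_nonneg_right ?_ h1.le) hp
  have e1 : Real.exp (-S.mu * t) = Real.exp (-(S.lam * t)) ^ (S.mu / S.lam) := by
    rw [← Real.exp_mul]; congr 1; field_simp
  rw [e1]
  refine Real.rpow_le_rpow (Real.exp_pos _).le ?_ hpos.le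
  rw [Real.exp_neg, inv_eq_one_div, div_le_div_iff₀ (Real.exp_pos _) hκ]
  linarith

/-- Until shortly before the unstable linear coordinate reaches `x̄_∞`, orbits starting near `x₀`
avoid `L`: in linear coordinates they stay close to the union of two compact segments of the axes,
which `L` does not meet. -/
lemma no_early_hit {x₀ q D : EuclideanSpace ℝ (Fin 2)} {xb w tinf η : ℝ}
    (hx₀ : ‖x₀‖ < S.delta / 8) (hxb : 0 < xb) (hxb' : xb < S.delta / 4)
    (hhx₀ : S.h x₀ = vec2 xb 0)
    (hq : ‖q‖ < S.delta) (hw : 0 < w) (hhq : S.h q = vec2 0 w)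
    (hrow : ∀ y, (fderiv ℝ S.h q y) 0 = ⟪D, y⟫)
    (htinf : 0 ≤ tinf)
    (hmiss : ∀ t : ℝ, tinf ≤ t → ¬ ∃ r : ℝ, S.phi t x₀ = q + r • D)
    (hη : 0 < η) (hηw : η < w) (hηδ : w + η < S.delta / 4) :
    ∀ᶠ p : ℝ × ℝ in 𝓝 (xb, 0), 0 < p.2 → ∀ t, tinf ≤ t →
      Real.exp (S.lam * t) * p.2 ≤ w - η →
      side D q (S.hinv (S.lin t (vec2 p.1 p.2))) ≠ 0 := by
  have hl := S.lam_pos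
  have hm := S.mu_pos
  have hδ := S.delta_pos
  obtain ⟨hD, hsign⟩ := S.side_sign hq (by rw [abs_of_pos hw]; linarith) hhq hrow
  simp only [mem_line_iff hD] at hmiss
  -- the stable orbit in linear coordinates
  have hlin0 : ∀ t, S.lin t (S.h x₀) = vec2 (Real.exp (-S.mu * t) * xb) 0 := fun t => by
    rw [hhx₀]; simp [lin]
  have hexp1 : ∀ t, 0 ≤ t → Real.exp (-S.mu * t) ≤ 1 := fun t ht =>
    Real.exp_le_one_iff.2 (by nlinarith)
  have horb : ∀ t, 0 ≤ t → S.phi t x₀ = S.hinv (vec2 (Real.exp (-S.mu * t) * xb) 0) := by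
    intro t ht
    rw [← hlin0]
    refine (S.track (T := t) (by linarith) (fun s hs => ?_) ⟨ht, le_rfl⟩).2.2
    rw [hlin0]
    refine (norm_vec2_le _ _).trans ?_
    rw [abs_zero, add_zero, abs_of_pos (by positivity)]
    nlinarith [hexp1 s hs.1]
  -- the open set on which the line is not met, and the two segments inside it
  set O : Set (EuclideanSpace ℝ (Fin 2)) :=
    ball 0 S.delta ∩ (fun y => side D q (S.hinv y)) ⁻¹' {0}ᶜ with hO
  have hgc : ContinuousOn (fun y => side D q (S.hinv y)) (ball 0 S.delta) :=
    (continuous_side D q).comp_continuousOn S.continuousOn_hinv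
  have hOo : IsOpen O := hgc.isOpen_inter_preimage isOpen_ball isOpen_compl_singleton
  set a₀ := Real.exp (-S.mu * tinf) * xb with ha₀
  have ha₀le : a₀ ≤ xb := by nlinarith [hexp1 tinf htinf]
  set K : Set (EuclideanSpace ℝ (Fin 2)) :=
    (fun a => vec2 a 0) '' Set.Icc 0 a₀ ∪ (fun b => vec2 0 b) '' Set.Icc 0 (w - η) with hK
  have hc1 : Continuous (fun a : ℝ => vec2 a 0) :=
    continuous_vec2.comp (continuous_id.prodMk continuous_const)
  have hc2 : Continuous (fun b : ℝ => vec2 0 b) :=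
    continuous_vec2.comp (continuous_const.prodMk continuous_id)
  have hKc : IsCompact K :=
    (isCompact_Icc.image hc1).union (isCompact_Icc.image hc2)
  have hleg2 : ∀ b, 0 ≤ b → b ≤ w - η → vec2 0 b ∈ O := by
    intro b hb0 hb
    have hbδ : |b| < S.delta := by rw [abs_of_nonneg hb0]; linarith
    refine ⟨mem_ball_zero_iff.2 ((norm_vec2_le 0 b).trans_lt (by simpa using hbδ)), fun h0 => ?_⟩
    have h1 := hsign b hbδ (by linarith)
    have h0' : side D q (S.hinv (vec2 0 b)) = 0 := h0
    rw [h0', mul_zero] at h1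
    exact lt_irrefl _ h1
  have hKO : K ⊆ O := by
    rintro _ (⟨a, ⟨h0, h1⟩, rfl⟩ | ⟨b, ⟨h0, h1⟩, rfl⟩)
    · rcases h0.eq_or_lt with rfl | h0
      · exact hleg2 0 le_rfl (by linarith)
      · refine ⟨mem_ball_zero_iff.2 ((norm_vec2_le a 0).trans_lt ?_), fun hz => ?_⟩
        · rw [abs_zero, add_zero, abs_of_pos h0]; linarith
        · -- a point of the first leg is on the orbit of `x₀` after time `tinf`
          set t := -Real.log (a / xb) / S.mu with ht
          have e1 : Real.exp (-S.mu * t) * xb = a := by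
            have : -S.mu * t = Real.log (a / xb) := by rw [ht]; field_simp
            rw [this, Real.exp_log (by positivity)]; field_simp
          have e2 : tinf ≤ t := by
            have : Real.exp (-S.mu * t) ≤ Real.exp (-S.mu * tinf) := by
              rw [← e1] at h1
              exact le_of_mul_le_mul_right h1 hxb
            nlinarith [Real.exp_le_exp.1 this]
          refine hmiss t e2 ?_
          rw [horb t (htinf.trans e2), e1]
          exact hz
    · exact hleg2 b h0 h1
  obtain ⟨r, hr, hthick⟩ := hKc.exists_thickening_subset_open hOo hKO
  have c1 : ∀ᶠ p : ℝ × ℝ in 𝓝 (xb, 0), |p.1 - xb| < r / 2 :=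
    (continuous_fst.sub continuous_const).abs.continuousAt.tendsto.eventually
      (gt_mem_nhds (by simpa using half_pos hr))
  have c2 : ∀ᶠ p : ℝ × ℝ in 𝓝 (xb, 0), 0 < p.1 :=
    continuous_fst.continuousAt.tendsto.eventually (lt_mem_nhds hxb)
  filter_upwards [c1, c2, S.stable_small xb (half_pos hr) (half_pos hr)] with p c1 c2 c5 hp t h0 hlt
  have h0' := htinf.trans h0
  have hlin : S.lin t (vec2 p.1 p.2) =
    vec2 (Real.exp (-S.mu * t) * p.1) (Real.exp (S.lam * t) * p.2) := rfl
  rw [hlin]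
  have hmemO : vec2 (Real.exp (-S.mu * t) * p.1) (Real.exp (S.lam * t) * p.2) ∈ O := by
    refine hthick (mem_thickening_iff.2 ?_)
    have hbpos := mul_pos (Real.exp_pos (S.lam * t)) hp
    by_cases hb : r / 2 ≤ Real.exp (S.lam * t) * p.2
    · refine ⟨vec2 0 (Real.exp (S.lam * t) * p.2), Or.inr ⟨_, ⟨hbpos.le, hlt⟩, rfl⟩, ?_⟩
      rw [dist_eq_norm, vec2_sub]
      refine (norm_vec2_le _ _).trans_lt ?_
      rw [sub_zero, sub_self, abs_zero, add_zero, abs_of_pos (mul_pos (Real.exp_pos _) c2)]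
      linarith [c5 hp c2 t hb]
    · refine ⟨vec2 (Real.exp (-S.mu * t) * xb) 0, Or.inl ⟨_, ⟨by positivity, ?_⟩, rfl⟩, ?_⟩
      · have : Real.exp (-S.mu * t) ≤ Real.exp (-S.mu * tinf) :=
          Real.exp_le_exp.2 (by nlinarith)
        exact mul_le_mul_of_nonneg_right this hxb.le
      · rw [dist_eq_norm, vec2_sub]
        refine (norm_vec2_le _ _).trans_lt ?_
        rw [sub_zero, abs_of_pos hbpos, ← mul_sub, abs_mul, abs_of_pos (Real.exp_pos _)]
        have := mul_le_of_le_one_left (abs_nonneg (p.1 - xb)) (hexp1 t h0')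
        linarith
  exact hmemO.2

/-- The sign of `side` on the unstable axis persists for small stable coordinates. -/
lemma side_sign_near {q D : EuclideanSpace ℝ (Fin 2)} {w b : ℝ} (hq : ‖q‖ < S.delta)
    (hw : |w| < S.delta) (hhq : S.h q = vec2 0 w)
    (hrow : ∀ y, (fderiv ℝ S.h q y) 0 = ⟪D, y⟫) (hb : |b| < S.delta) (hbw : b ≠ w) :
    ∃ r > 0, ∀ a, |a| < r → 0 < (b - w) * side D q (S.hinv (vec2 a b)) := by
  have hsign := (S.side_sign hq hw hhq hrow).2
  have hbm : vec2 0 b ∈ ball (0 : EuclideanSpace ℝ (Fin 2)) S.delta :=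
    mem_ball_zero_iff.2 ((norm_vec2_le 0 b).trans_lt (by simpa using hb))
  have hgc : ContinuousOn (fun y => side D q (S.hinv y)) (ball 0 S.delta) :=
    (continuous_side D q).comp_continuousOn S.continuousOn_hinv
  have hca : ContinuousAt (fun a : ℝ => side D q (S.hinv (vec2 a b))) 0 :=
    ContinuousAt.comp (f := fun a : ℝ => vec2 a b)
      (hgc.continuousAt (isOpen_ball.mem_nhds hbm))
      (continuous_vec2.comp (continuous_id.prodMk continuous_const)).continuousAt
  have := (continuousAt_const (y := b - w)).mul hca
  obtain ⟨r, hr, h⟩ := Metric.eventually_nhds_iff.1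
    (this.tendsto.eventually (lt_mem_nhds (hsign b hb hbw)))
  exact ⟨r, hr, fun a ha => h (by simpa [Real.dist_eq] using ha)⟩

/-- For initial points whose linearized coordinates `p` are close to `(x̄₀, 0)` with positive second
coordinate, the first hitting of `L` takes place when the unstable linear coordinate is within
`η` of `x̄_∞`: `no_early_hit` excludes earlier hits, and `side` changes sign over the window. -/
lemma first_hit {x₀ q D : EuclideanSpace ℝ (Fin 2)} {xb w tinf η : ℝ}
    (hx₀ : ‖x₀‖ < S.delta / 8) (hxb : 0 < xb) (hxb' : xb < S.delta / 4)
    (hhx₀ : S.h x₀ = vec2 xb 0)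
    (hq : ‖q‖ < S.delta) (hw : 0 < w) (hhq : S.h q = vec2 0 w)
    (hrow : ∀ y, (fderiv ℝ S.h q y) 0 = ⟪D, y⟫)
    (htinf : 0 ≤ tinf)
    (hmiss : ∀ t : ℝ, tinf ≤ t → ¬ ∃ r : ℝ, S.phi t x₀ = q + r • D)
    (hη : 0 < η) (hηw : η < w) (hηδ : w + η < S.delta / 4) :
    ∀ᶠ p : ℝ × ℝ in 𝓝 (xb, 0), 0 < p.2 → ∀ x, ‖x‖ ≤ 7 / 8 * S.delta →
      S.h x = vec2 p.1 p.2 →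
      ∃ s, s = sInf {t : ℝ | tinf ≤ t ∧ ∃ r : ℝ, S.phi t x = q + r • D} ∧
        (∃ r : ℝ, S.phi s x = q + r • D) ∧
        S.h (S.phi s x) = S.lin s (vec2 p.1 p.2) ∧
        S.phi s x = S.hinv (S.lin s (vec2 p.1 p.2)) ∧
        |Real.exp (S.lam * s) * p.2 - w| ≤ η := by
  have hl := S.lam_pos
  have hm := S.mu_pos
  have hδ := S.delta_pos
  have hw' : |w| < S.delta := by rw [abs_of_pos hw]; linarith
  have hearly := S.no_early_hit hx₀ hxb hxb' hhx₀ hq hw hhq hrow htinf hmiss hη hηw hηδ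
  obtain ⟨hD, -⟩ := S.side_sign hq hw' hhq hrow
  simp only [mem_line_iff hD]
  have hexp1 : ∀ t, 0 ≤ t → Real.exp (-S.mu * t) ≤ 1 := fun t ht =>
    Real.exp_le_one_iff.2 (by nlinarith)
  obtain ⟨r₁, hr₁, hm1⟩ := S.side_sign_near (b := w - η) hq hw' hhq hrow
    (by rw [abs_of_pos] <;> linarith) (by linarith)
  obtain ⟨r₂, hr₂, hm2⟩ := S.side_sign_near (b := w + η) hq hw' hhq hrow
    (by rw [abs_of_pos] <;> linarith) (by linarith)
  have c2 : ∀ᶠ p : ℝ × ℝ in 𝓝 (xb, 0), 0 < p.1 :=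
    continuous_fst.continuousAt.tendsto.eventually (lt_mem_nhds hxb)
  have c3 : ∀ᶠ p : ℝ × ℝ in 𝓝 (xb, 0), p.1 < S.delta / 4 :=
    continuous_fst.continuousAt.tendsto.eventually (gt_mem_nhds hxb')
  have c4 : ∀ᶠ p : ℝ × ℝ in 𝓝 (xb, 0), Real.exp (S.lam * tinf) * p.2 < w - η :=
    (continuous_const.mul continuous_snd).continuousAt.tendsto.eventually
      (gt_mem_nhds (by simpa using hηw))
  filter_upwards [c2, c3, c4, hearly,
    S.stable_small xb (κ := w - η) (by linarith) hr₁,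
    S.stable_small xb (κ := w + η) (by linarith) hr₂] with p c2 c3 c4 c5 c6 c7 hp x hx hhx
  -- times at which the unstable coordinate equals `b`
  have htime : ∀ b, 0 < b → ∃ t, Real.exp (S.lam * t) * p.2 = b := fun b hb =>
    ⟨Real.log (b / p.2) / S.lam, by
      rw [mul_div_cancel₀ _ hl.ne', Real.exp_log (by positivity)]; field_simp⟩
  obtain ⟨t₁, ht₁⟩ := htime (w - η) (by linarith)
  obtain ⟨t₂, ht₂⟩ := htime (w + η) (by linarith)
  have hmono : ∀ s t, Real.exp (S.lam * s) * p.2 ≤ Real.exp (S.lam * t) * p.2 → s ≤ t := by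
    intro s t hst
    have := Real.exp_le_exp.1 (le_of_mul_le_mul_right hst hp)
    exact le_of_mul_le_mul_left this hl
  have hmono' : ∀ s t, s ≤ t → Real.exp (S.lam * s) * p.2 ≤ Real.exp (S.lam * t) * p.2 := by
    intro s t hst
    gcongr
  have h01 : tinf ≤ t₁ := hmono _ _ (by rw [ht₁]; exact c4.le)
  have h12 : t₁ ≤ t₂ := hmono _ _ (by rw [ht₁, ht₂]; linarith)
  have hlin : ∀ t, S.lin t (vec2 p.1 p.2) =
    vec2 (Real.exp (-S.mu * t) * p.1) (Real.exp (S.lam * t) * p.2) := fun t => rfl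
  have htrack : ∀ t, 0 ≤ t → t ≤ t₂ → S.phi t x ∈ S.U ∧
      S.h (S.phi t x) = S.lin t (vec2 p.1 p.2) ∧ S.phi t x = S.hinv (S.lin t (vec2 p.1 p.2)) := by
    intro t h0 h2
    have := S.track (T := t₂) hx (fun s hs => ?_) (s := t) ⟨h0, h2⟩
    · rwa [hhx] at this
    · rw [hhx, hlin]
      have b1 : Real.exp (-S.mu * s) * p.1 ≤ S.delta / 4 := by nlinarith [hexp1 s hs.1]
      have b2 : Real.exp (S.lam * s) * p.2 ≤ S.delta / 4 := by
        have := hmono' s t₂ hs.2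
        linarith
      have b3 := mul_nonneg (Real.exp_pos (-S.mu * s)).le c2.le
      have b4 := mul_nonneg (Real.exp_pos (S.lam * s)).le hp.le
      refine abs_le_of_sq_le_sq' ?_ (by positivity) |>.2
      rw [norm_vec2_sq]
      nlinarith
  have hno : ∀ t, tinf ≤ t → side D q (S.phi t x) = 0 → t₁ ≤ t := by
    intro t h0 hz
    by_contra! hlt
    rw [(htrack t (htinf.trans h0) (hlt.le.trans h12)).2.2] at hz
    exact c5 hp t h0 (by rw [← ht₁]; exact hmono' _ _ hlt.le) hz
  -- a hit inside the window
  have hcs : Continuous fun t => side D q (S.phi t x) :=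
    (continuous_side D q).comp (S.continuous_phi x)
  have hneg : side D q (S.phi t₁ x) ≤ 0 := by
    rw [(htrack t₁ (htinf.trans h01) h12).2.2, hlin, ht₁]
    have := hm1 (Real.exp (-S.mu * t₁) * p.1) (by
      rw [abs_of_pos (mul_pos (Real.exp_pos _) c2)]
      exact c6 hp c2 t₁ ht₁.ge)
    by_contra! hcon
    nlinarith
  have hpos : 0 ≤ side D q (S.phi t₂ x) := by
    rw [(htrack t₂ (htinf.trans (h01.trans h12)) le_rfl).2.2, hlin, ht₂]
    have := hm2 (Real.exp (-S.mu * t₂) * p.1) (by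
      rw [abs_of_pos (mul_pos (Real.exp_pos _) c2)]
      exact c7 hp c2 t₂ ht₂.ge)
    by_contra! hcon
    nlinarith
  obtain ⟨u, hu, huz⟩ := intermediate_value_Icc h12 hcs.continuousOn
    (show (0 : ℝ) ∈ _ from ⟨hneg, hpos⟩)
  set H : Set ℝ := {t : ℝ | tinf ≤ t ∧ side D q (S.phi t x) = 0} with hH
  have hHcl : IsClosed H := (isClosed_le continuous_const continuous_id).inter
    (isClosed_eq hcs continuous_const)
  have hbdd : BddBelow H := ⟨tinf, fun t ht => ht.1⟩
  have huH : u ∈ H := ⟨h01.trans hu.1, huz⟩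
  have hsH : sInf H ∈ H := hHcl.csInf_mem ⟨u, huH⟩ hbdd
  have hs2 : sInf H ≤ t₂ := (csInf_le hbdd huH).trans hu.2
  have hs1 : t₁ ≤ sInf H := hno _ hsH.1 hsH.2
  obtain ⟨-, k2, k3⟩ := htrack _ (htinf.trans hsH.1) hs2
  refine ⟨sInf H, rfl, hsH.2, k2, k3, abs_le.2 ⟨?_, ?_⟩⟩
  · linarith [hmono' _ _ hs1]
  · linarith [hmono' _ _ hs2]

end SaddleFlow

/-! ### Asymptotics of the hitting position -/

/-- Theorem 3.5 (hitting-position asymptotics): with `s_z` the first time `≥ t_∞` at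
which `φ_t(x₀+z)` hits `L = {x_∞ + r D_∞ᵀ}`, one has
`(x̄_∞/(D₀z))^{μ/λ} (φ_{s_z}(x₀+z) − x_∞) → x̄₀ D_∞ᵀ/|D_∞|²` as `z → 0` with
`D₀z > 0`, `|z| ≤ C D₀z`. -/
theorem hitting_position_asymptotics
    (S : SaddleFlow) (x₀ : EuclideanSpace ℝ (Fin 2))
    (hx₀_pos : 0 < ‖x₀‖) (hx₀_lt : ‖x₀‖ < S.delta / 8)
    (hx₀_stable : Tendsto (fun t => S.phi t x₀) atTop (𝓝 (0 : EuclideanSpace ℝ (Fin 2))))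
    (xb : ℝ) (hxb_pos : 0 < xb) (hxb_lt : |xb| < S.delta / 4)
    (hxb : Tendsto (fun t => Real.exp (S.mu * t) • S.phi t x₀) atTop (𝓝 (vec2 xb 0)))
    (D₀ : EuclideanSpace ℝ (Fin 2)) (hD₀_ne : D₀ ≠ 0)
    (hD₀ : Tendsto (fun t => Real.exp (-S.lam * t) • fderiv ℝ (S.phi t) x₀) atTop
      (𝓝 ((innerSL ℝ D₀).smulRight (EuclideanSpace.single 1 (1 : ℝ)))))
    (xinf : EuclideanSpace ℝ (Fin 2)) (hxinf_pos : 0 < ‖xinf‖) (hxinf_lt : ‖xinf‖ < S.delta / 8)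
    (hxinf_stable : Tendsto (fun t => S.phi (-t) xinf) atTop (𝓝 (0 : EuclideanSpace ℝ (Fin 2))))
    (xbinf : ℝ) (hxbinf_pos : 0 < xbinf) (hxbinf_lt : |xbinf| < S.delta / 4)
    (hxbinf : Tendsto (fun t => Real.exp (S.lam * t) • S.phi (-t) xinf) atTop
      (𝓝 (vec2 0 xbinf)))
    (Dinf : EuclideanSpace ℝ (Fin 2)) (hDinf_ne : Dinf ≠ 0)
    (hDinf : Tendsto (fun t => Real.exp (-S.mu * t) • fderiv ℝ (S.phi (-t)) xinf) atTop
      (𝓝 ((innerSL ℝ Dinf).smulRight (EuclideanSpace.single 0 (1 : ℝ)))))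
    (tinf : ℝ) (htinf : 0 ≤ tinf)
    (hmiss : ∀ t : ℝ, tinf ≤ t → ¬ ∃ r : ℝ, S.phi t x₀ = xinf + r • Dinf) :
    ∀ C : ℝ, 0 < C → ∀ ε : ℝ, 0 < ε → ∃ ρ : ℝ, 0 < ρ ∧
      ∀ z : EuclideanSpace ℝ (Fin 2), 0 < ‖z‖ → ‖z‖ < ρ → 0 < ⟪D₀, z⟫ →
        ‖z‖ ≤ C * ⟪D₀, z⟫ →
        ‖((xbinf / ⟪D₀, z⟫) ^ (S.mu / S.lam)) •
            (S.phi (sInf {t : ℝ | tinf ≤ t ∧ ∃ r : ℝ, S.phi t (x₀ + z) = xinf + r • Dinf})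
              (x₀ + z) - xinf) -
          (xb / ‖Dinf‖ ^ 2) • Dinf‖ < ε := by
  have hl := S.lam_pos
  have hm := S.mu_pos
  have hδ := S.delta_pos
  have hx₀U : x₀ ∈ S.U := S.mem_U (by linarith)
  have hqU : xinf ∈ S.U := S.mem_U (by linarith)
  have hqδ : ‖xinf‖ < S.delta := by linarith
  rw [abs_of_pos hxb_pos] at hxb_lt
  rw [abs_of_pos hxbinf_pos] at hxbinf_lt
  have hconj0 : ∀ t, ∀ y ∈ S.U, S.phi t y ∈ S.U →
      S.h (S.phi t y) 0 = Real.exp (-S.mu * t) * S.h y 0 := fun t y hy hty => by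
    rw [S.h_conj t y hy hty]; rfl
  have hconj1 : ∀ t, ∀ y ∈ S.U, S.phi t y ∈ S.U →
      S.h (S.phi t y) 1 = Real.exp (S.lam * t) * S.h y 1 := fun t y hy hty => by
    rw [S.h_conj t y hy hty]; rfl
  have hdecay : ∀ c : ℝ, 0 < c → Tendsto (fun t => Real.exp (-c * t)) atTop (𝓝 0) := by
    intro c hc
    have : Tendsto (fun t => c * t) atTop atTop := tendsto_id.const_mul_atTop hc
    refine (Real.tendsto_exp_neg_atTop_nhds_zero.comp this).congr fun t => ?_
    simp only [Function.comp_apply, neg_mul]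
  have hee : ∀ c t : ℝ, Real.exp (-c * t) * Real.exp (c * t) = 1 := fun c t => by
    rw [← Real.exp_add]; simp
  have hee' : ∀ c t : ℝ, Real.exp (c * t) * Real.exp (-c * t) = 1 := fun c t => by
    rw [← Real.exp_add]; simp
  have hU₀ := hx₀_stable.eventually (S.U_open.mem_nhds S.U_mem)
  have hUq := hxinf_stable.eventually (S.U_open.mem_nhds S.U_mem)
  -- linear coordinates of `x₀` and `x_∞`
  have hhx₀ : S.h x₀ = vec2 xb 0 := by
    have e0 : S.h x₀ 0 = vec2 xb 0 0 := coord_of_tendsto S.h_littleO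
      (m := fun t => Real.exp (-S.mu * t)) hx₀_stable (fun t => hee' _ _) hxb
      (hU₀.mono fun t ht => hconj0 t x₀ hx₀U ht)
    have e1 : S.h x₀ 1 = (0 : EuclideanSpace ℝ (Fin 2)) 1 := coord_of_tendsto S.h_littleO
      (k := fun t => Real.exp (-S.lam * t)) (m := fun t => Real.exp (S.lam * t))
      hx₀_stable (fun t => hee _ _) (by simpa using (hdecay _ hl).smul hx₀_stable)
      (hU₀.mono fun t ht => hconj1 t x₀ hx₀U ht)
    rw [← vec2_eta (S.h x₀), e0, e1]; rfl
  have hhq : S.h xinf = vec2 0 xbinf := by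
    have e1 : S.h xinf 1 = vec2 0 xbinf 1 := coord_of_tendsto S.h_littleO
      (m := fun t => Real.exp (-S.lam * t)) hxinf_stable (fun t => hee' _ _) hxbinf
      (hUq.mono fun t ht => by rw [hconj1 (-t) xinf hqU ht]; simp)
    have e0 : S.h xinf 0 = (0 : EuclideanSpace ℝ (Fin 2)) 0 := coord_of_tendsto S.h_littleO
      (k := fun t => Real.exp (-S.mu * t)) (m := fun t => Real.exp (S.mu * t))
      hxinf_stable (fun t => hee _ _) (by simpa using (hdecay _ hm).smul hxinf_stable)
      (hUq.mono fun t ht => by rw [hconj0 (-t) xinf hqU ht]; simp)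
    rw [← vec2_eta (S.h xinf), e0, e1]; rfl
  -- `D₀` and `D_∞` are rows of `Dh` at `x₀` and `x_∞`
  have hrow₀ : ∀ y, (fderiv ℝ S.h x₀ y) 1 = ⟪D₀, y⟫ :=
    row_of_tendsto S.U_open S.U_mem S.h_smooth S.hasFDerivAt_h_zero
      (m := fun t => Real.exp (S.lam * t)) hx₀U S.phi_contDiff hx₀_stable (fun t => hee _ _) hD₀
      hconj1
  have hrow : ∀ y, (fderiv ℝ S.h xinf y) 0 = ⟪Dinf, y⟫ :=
    row_of_tendsto S.U_open S.U_mem S.h_smooth S.hasFDerivAt_h_zero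
      (P := fun t => S.phi (-t))
      (m := fun t => Real.exp (S.mu * t)) hqU (fun t => S.phi_contDiff (-t)) hxinf_stable
      (fun t => hee _ _) hDinf
      (fun t y hy hty => by rw [hconj0 (-t) y hy hty]; simp)
  intro C hC ε hε
  set l : Filter (EuclideanSpace ℝ (Fin 2)) :=
    𝓝 0 ⊓ 𝓟 {z | 0 < ⟪D₀, z⟫ ∧ ‖z‖ ≤ C * ⟪D₀, z⟫} with hldef
  have hl0 : l ≤ 𝓝 0 := inf_le_left
  have hcone : ∀ᶠ z in l, 0 < ⟪D₀, z⟫ ∧ ‖z‖ ≤ C * ⟪D₀, z⟫ := by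
    have h1 : {z | 0 < ⟪D₀, z⟫ ∧ ‖z‖ ≤ C * ⟪D₀, z⟫} ∈ l :=
      (inf_le_right : l ≤ _) (mem_principal_self _)
    exact h1
  set s : EuclideanSpace ℝ (Fin 2) → ℝ := fun z =>
    sInf {t : ℝ | tinf ≤ t ∧ ∃ r : ℝ, S.phi t (x₀ + z) = xinf + r • Dinf} with hs
  set X : EuclideanSpace ℝ (Fin 2) → ℝ := fun z => (xbinf / ⟪D₀, z⟫) ^ (S.mu / S.lam) with hX
  set F : EuclideanSpace ℝ (Fin 2) → EuclideanSpace ℝ (Fin 2) := fun z =>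
    S.phi (s z) (x₀ + z) with hF
  suffices hmain : Tendsto (fun z => X z • (F z - xinf) - (xb / ‖Dinf‖ ^ 2) • Dinf) l (𝓝 0) by
    have h1 := (tendsto_zero_iff_norm_tendsto_zero.1 hmain).eventually (gt_mem_nhds hε)
    rw [hldef, eventually_inf_principal, Metric.eventually_nhds_iff] at h1
    obtain ⟨ρ, hρ, h2⟩ := h1
    exact ⟨ρ, hρ, fun z _ hz hz1 hz2 => h2 (by simpa using hz) ⟨hz1, hz2⟩⟩
  set A : EuclideanSpace ℝ (Fin 2) → ℝ := fun z => S.h (x₀ + z) 0 with hA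
  set β : EuclideanSpace ℝ (Fin 2) → ℝ := fun z => S.h (x₀ + z) 1 with hβ
  have hhc : Tendsto (fun z => S.h (x₀ + z)) l (𝓝 (vec2 xb 0)) := by
    have h1 : ContinuousAt S.h (x₀ + 0) := by
      rw [add_zero]; exact (S.h_smooth x₀ hx₀U).continuousAt
    have h2 : Tendsto (fun z => x₀ + z) l (𝓝 (x₀ + 0)) :=
      (tendsto_const_nhds.add tendsto_id).mono_left hl0
    have := h1.tendsto.comp h2
    rwa [add_zero, hhx₀] at this
  have hcoord : ∀ i : Fin 2, Continuous fun x : EuclideanSpace ℝ (Fin 2) => x i := fun i =>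
    (EuclideanSpace.proj (𝕜 := ℝ) i).continuous
  have hAt : Tendsto A l (𝓝 xb) := ((hcoord 0).tendsto (vec2 xb 0)).comp hhc
  have hβt : Tendsto β l (𝓝 0) := ((hcoord 1).tendsto (vec2 xb 0)).comp hhc
  have hdx₀ : HasFDerivAt S.h (fderiv ℝ S.h x₀) x₀ :=
    ((S.h_smooth x₀ hx₀U).differentiableAt one_ne_zero).hasFDerivAt
  have hβd : Tendsto (fun z => β z / ⟪D₀, z⟫) l (𝓝 1) := by
    have h1 := (hasFDerivAt_iff_isLittleO_nhds_zero.1 hdx₀).mono hl0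
    have h2 : (fun z => β z - ⟪D₀, z⟫) =o[l] fun z => z := by
      refine Asymptotics.IsBigO.trans_isLittleO (Asymptotics.IsBigO.of_bound 1 ?_) h1
      filter_upwards with z
      have h3 := abs_coord_le (S.h (x₀ + z) - S.h x₀ - fderiv ℝ S.h x₀ z) 1
      have h4 : S.h x₀ 1 = 0 := by rw [hhx₀]; rfl
      rw [PiLp.sub_apply, PiLp.sub_apply, hrow₀, h4, sub_zero] at h3
      simpa [hβ] using h3
    have h3 : (fun z => z) =O[l] fun z => ⟪D₀, z⟫ := by
      refine Asymptotics.IsBigO.of_bound C ?_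
      filter_upwards [hcone] with z hz
      rw [Real.norm_eq_abs, abs_of_pos hz.1]
      exact hz.2
    have h4 : Asymptotics.IsEquivalent l β (fun z => ⟪D₀, z⟫) := h2.trans_isBigO h3
    exact (Asymptotics.isEquivalent_iff_tendsto_one (hcone.mono fun z hz => hz.1.ne')).1 h4
  have hβpos : ∀ᶠ z in l, 0 < β z := by
    filter_upwards [hβd.eventually (lt_mem_nhds zero_lt_one), hcone] with z h1 h2
    exact (div_pos_iff_of_pos_right h2.1).1 h1
  have hball : ∀ᶠ z in l, ‖x₀ + z‖ ≤ 7 / 8 * S.delta := by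
    have h1 : Tendsto (fun z => ‖x₀ + z‖) l (𝓝 ‖x₀ + 0‖) :=
      ((tendsto_const_nhds.add tendsto_id).mono_left hl0).norm
    refine (h1.eventually (gt_mem_nhds ?_ : ∀ᶠ u in _, u < 7 / 8 * S.delta)).mono
      fun z hz => hz.le
    rw [add_zero]; linarith
  have hAβ : Tendsto (fun z => (A z, β z)) l (𝓝 (xb, 0)) := hAt.prodMk_nhds hβt
  set a : EuclideanSpace ℝ (Fin 2) → ℝ := fun z => Real.exp (-S.mu * s z) * A z with ha
  set b : EuclideanSpace ℝ (Fin 2) → ℝ := fun z => Real.exp (S.lam * s z) * β z with hb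
  have hhit : ∀ η, 0 < η → η < xbinf → xbinf + η < S.delta / 4 → ∀ᶠ z in l,
      (∃ r : ℝ, F z = xinf + r • Dinf) ∧ S.h (F z) = vec2 (a z) (b z) ∧
        F z = S.hinv (vec2 (a z) (b z)) ∧ |b z - xbinf| ≤ η := by
    intro η h1 h2 h3
    filter_upwards [hAβ.eventually (S.first_hit hx₀_lt hxb_pos hxb_lt hhx₀ hqδ hxbinf_pos hhq hrow
      htinf hmiss h1 h2 h3), hβpos, hball] with z k1 k2 k3
    obtain ⟨_, rfl, k⟩ := k1 k2 (x₀ + z) k3 (vec2_eta _).symm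
    exact k
  obtain ⟨η₀, hη₀, hη₀w, hη₀δ⟩ : ∃ η₀, 0 < η₀ ∧ η₀ < xbinf ∧ xbinf + η₀ < S.delta / 4 := by
    refine ⟨min (xbinf / 2) ((S.delta / 4 - xbinf) / 2), lt_min (by linarith) (by linarith), ?_, ?_⟩
    · exact (min_le_left _ _).trans_lt (by linarith)
    · linarith [min_le_right (xbinf / 2) ((S.delta / 4 - xbinf) / 2)]
  have hbt : Tendsto b l (𝓝 xbinf) := by
    refine Metric.tendsto_nhds.2 fun e he => ?_
    have h1 : min η₀ (e / 2) ≤ η₀ := min_le_left _ _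
    filter_upwards [hhit (min η₀ (e / 2)) (lt_min hη₀ (by linarith)) (by linarith)
      (by linarith)] with z hz
    rw [Real.dist_eq]
    linarith [hz.2.2.2, min_le_right η₀ (e / 2)]
  have hpow : 0 < S.mu / S.lam := div_pos hm hl
  -- `e^{-μ s} = (β / b)^{μ/λ}`
  have hexps : ∀ᶠ z in l, Real.exp (-S.mu * s z) = (β z / b z) ^ (S.mu / S.lam) := by
    filter_upwards [hβpos] with z hz
    have h1 : β z / b z = Real.exp (-(S.lam * s z)) := by
      rw [hb, Real.exp_neg]; field_simp
    rw [h1, ← Real.exp_mul]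
    congr 1; field_simp
  have hat : Tendsto a l (𝓝 0) := by
    have h1 : Tendsto (fun z => (β z / b z) ^ (S.mu / S.lam) * A z) l
        (𝓝 ((0 / xbinf) ^ (S.mu / S.lam) * xb)) :=
      ((hβt.div hbt hxbinf_pos.ne').rpow_const (Or.inr hpow.le)).mul hAt
    rw [zero_div, Real.zero_rpow hpow.ne', zero_mul] at h1
    refine h1.congr' ?_
    filter_upwards [hexps] with z hz
    rw [ha, ← hz]
  have hXa : Tendsto (fun z => X z * a z) l (𝓝 xb) := by
    have h1 : Tendsto (fun z => (xbinf / b z * (β z / ⟪D₀, z⟫)) ^ (S.mu / S.lam) * A z) l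
        (𝓝 ((xbinf / xbinf * 1) ^ (S.mu / S.lam) * xb)) :=
      ((((tendsto_const_nhds (x := xbinf)).div hbt hxbinf_pos.ne').mul hβd).rpow_const
        (Or.inr hpow.le)).mul hAt
    rw [div_self hxbinf_pos.ne', one_mul, Real.one_rpow, one_mul] at h1
    refine h1.congr' ?_
    filter_upwards [hexps, hcone, hβpos, hbt.eventually (lt_mem_nhds hxbinf_pos)]
      with z h1 h2 h3 h4
    have h5 : xbinf / b z * (β z / ⟪D₀, z⟫) = xbinf / ⟪D₀, z⟫ * (β z / b z) := by
      ring
    rw [h5, Real.mul_rpow (div_pos hxbinf_pos h2.1).le (div_pos h3 h4).le, ← h1]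
    simp only [hX, ha]; ring
  have hhit₀ := hhit η₀ hη₀ hη₀w hη₀δ
  have hFt : Tendsto F l (𝓝 xinf) := by
    have h1 : ContinuousAt S.hinv (vec2 0 xbinf) := by
      rw [← hhq]
      exact (S.hinv_smooth _ ⟨xinf, hqU, rfl⟩).continuousAt
    have h2 : Tendsto (fun z => vec2 (a z) (b z)) l (𝓝 (vec2 0 xbinf)) :=
      (continuous_vec2.tendsto (0, xbinf)).comp (hat.prodMk_nhds hbt)
    have h3 := h1.tendsto.comp h2
    rw [← hhq, S.left_inv _ hqU] at h3
    exact h3.congr' (hhit₀.mono fun z hz => hz.2.2.1.symm)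
  set n : EuclideanSpace ℝ (Fin 2) → ℝ := fun z => ⟪Dinf, F z - xinf⟫ with hn
  have hDpos : 0 < ‖Dinf‖ := norm_pos_iff.2 hDinf_ne
  have hFn : ∀ᶠ z in l, F z - xinf = (n z / ‖Dinf‖ ^ 2) • Dinf := by
    filter_upwards [hhit₀] with z hz
    obtain ⟨r, hr⟩ := hz.1
    have h1 : F z - xinf = r • Dinf := by rw [hr]; abel
    have h2 : n z = r * ‖Dinf‖ ^ 2 := by
      rw [hn]; simp only [h1, inner_smul_right, real_inner_self_eq_norm_sq]
    rw [h1, h2]; field_simp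
  -- first order expansion of the first coordinate of `h` at `x_∞`, along `L`
  have han : Asymptotics.IsEquivalent l a n := by
    have hdq : HasFDerivAt S.h (fderiv ℝ S.h xinf) xinf :=
      ((S.h_smooth xinf hqU).differentiableAt one_ne_zero).hasFDerivAt
    have h1 := hdq.isLittleO.comp_tendsto hFt
    have h2 : (fun z => a z - n z) =o[l] fun z => F z - xinf := by
      refine Asymptotics.IsBigO.trans_isLittleO (Asymptotics.IsBigO.of_bound 1 ?_) h1
      filter_upwards [hhit₀] with z hz
      have h3 := abs_coord_le (S.h (F z) - S.h xinf - fderiv ℝ S.h xinf (F z - xinf)) 0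
      have h4 : S.h (F z) 0 = a z := by rw [hz.2.1]; rfl
      have h5 : S.h xinf 0 = 0 := by rw [hhq]; rfl
      rw [PiLp.sub_apply, PiLp.sub_apply, hrow, h4, h5, sub_zero] at h3
      simpa [hn] using h3
    have h3 : (fun z => F z - xinf) =O[l] n := by
      refine Asymptotics.IsBigO.of_bound (1 / ‖Dinf‖) ?_
      filter_upwards [hFn] with z hz
      rw [hz, norm_smul, norm_div, norm_pow, norm_norm]
      apply le_of_eq; field_simp
    exact h2.trans_isBigO h3
  have hXn : Tendsto (fun z => X z * n z) l (𝓝 xb) :=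
    (Asymptotics.IsEquivalent.refl.mul han).tendsto_nhds hXa
  have hfin : Tendsto (fun z => (X z * n z / ‖Dinf‖ ^ 2) • Dinf - (xb / ‖Dinf‖ ^ 2) • Dinf) l
      (𝓝 ((xb / ‖Dinf‖ ^ 2) • Dinf - (xb / ‖Dinf‖ ^ 2) • Dinf)) :=
    ((hXn.div_const _).smul_const _).sub tendsto_const_nhds
  rw [sub_self] at hfin
  refine hfin.congr' ?_
  filter_upwards [hFn] with z hz
  rw [hz, smul_smul, mul_div_assoc]
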